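/- For all g₁, g₂ ∈ (0,1/2) and all r ∈ (0,1): (1 − 4g₁g₂(1−r))² ≥ E(4g₂√(1−4g₁²)·r²/(1+r⁴))² + E(4g₁√(1−4g₂²)·r²/(1+r⁴))². (Non-generic GHZ-class states ψ(g₁,g₂,0,r) with g₁,g₂ ≠ 0, g₃ = 0 and r ∈ (0,1) satisfy the source-entanglement monogamy relation E_s² ≥ E₁₂² + E₁₃² + E₂₃².) -/

import Mathlib

/-- Binary Shannon entropy (base 2), with the convention `0 * log₂ 0 = 0`
(automatic since `Real.logb 2 0 = 0`). -/
noncomputable def binEntropy (p : ℝ) : ℝ :=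
  -p * Real.logb 2 p - (1 - p) * Real.logb 2 (1 - p)

/-- Entanglement-of-formation function of the concurrence `C`. -/
noncomputable def eof (C : ℝ) : ℝ :=
  binEntropy ((1 + Real.sqrt (1 - C ^ 2)) / 2)

lemma aux_log {y : ℝ} (h0 : 0 < y) (h1 : y ≤ 1) :
    (1 - y ^ 2) * Real.log (1 + y ^ 2) + y ^ 2 * (2 * Real.log y) ≤ 0 := by
  have hc := strictConcaveOn_log_Ioi.concaveOn
  have hy2 : 0 < y ^ 2 := by positivity
  have m1 : 1 + y ^ 2 ∈ Set.Ioi (0 : ℝ) := Set.mem_Ioi.2 (by positivity)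
  have m2 : y ^ 2 ∈ Set.Ioi (0 : ℝ) := hy2
  have w1 : 0 ≤ 1 - y ^ 2 := by nlinarith
  have h := hc.2 m1 m2 w1 hy2.le (by ring)
  simp only [smul_eq_mul] at h
  have e : (1 - y ^ 2) * (1 + y ^ 2) + y ^ 2 * y ^ 2 = 1 := by ring
  rw [e, Real.log_one, Real.log_pow] at h
  push_cast at h
  exact h

lemma aux_phi {y : ℝ} (h0 : 0 < y) (h1 : y ≤ 1) :
    (1 / y + y) * Real.log (1 + y ^ 2) - 2 * (y * Real.log y) ≤ 2 * Real.log 2 := by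
  have hd : ∀ x : ℝ, 0 < x → HasDerivAt
      (fun y : ℝ => (1 / y + y) * Real.log (1 + y ^ 2) - 2 * (y * Real.log y))
      ((1 - 1 / x ^ 2) * Real.log (1 + x ^ 2) - 2 * Real.log x) x := by
    intro x hx
    have hx0 : x ≠ 0 := hx.ne'
    have hp : (1 + x ^ 2) ≠ 0 := by positivity
    have a1 : HasDerivAt (fun y : ℝ => 1 / y + y) (-(x ^ 2)⁻¹ + 1) x := by
      simp only [one_div]
      exact (hasDerivAt_inv hx0).add (hasDerivAt_id x)
    have a2 : HasDerivAt (fun y : ℝ => Real.log (1 + y ^ 2)) ((2 * x) / (1 + x ^ 2)) x := by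
      have := ((hasDerivAt_pow 2 x).const_add 1).log hp
      simpa using this
    have a3 : HasDerivAt (fun y : ℝ => y * Real.log y) (Real.log x + 1) x :=
      Real.hasDerivAt_mul_log hx0
    refine ((a1.mul a2).sub (a3.const_mul 2)).congr_deriv ?_
    field_simp
    ring
  have hm : MonotoneOn (fun y : ℝ => (1 / y + y) * Real.log (1 + y ^ 2) - 2 * (y * Real.log y))
      (Set.Ioc 0 1) := by
    apply monotoneOn_of_deriv_nonneg (convex_Ioc 0 1)
    · intro x hx
      exact (hd x hx.1).continuousAt.continuousWithinAt
    · intro x hx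
      rw [interior_Ioc] at hx
      exact (hd x hx.1).differentiableAt.differentiableWithinAt
    · intro x hx
      rw [interior_Ioc] at hx
      rw [(hd x hx.1).deriv]
      have h := aux_log hx.1 hx.2.le
      have hx2 : 0 < x ^ 2 := pow_pos hx.1 2
      have e : (1 - 1 / x ^ 2) * Real.log (1 + x ^ 2) - 2 * Real.log x
          = -((1 - x ^ 2) * Real.log (1 + x ^ 2) + x ^ 2 * (2 * Real.log x)) / x ^ 2 := by
        have := hx.1.ne'
        field_simp
        ring
      rw [e]
      exact div_nonneg (by linarith) hx2.le
  have := hm (a := y) ⟨h0, h1⟩ (b := 1) ⟨one_pos, le_refl _⟩ h1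
  norm_num at this ⊢
  exact this

lemma eof_bound {C : ℝ} (h0 : 0 < C) (h1 : C ≤ 1) : 0 ≤ eof C ∧ eof C ≤ C := by
  set s := Real.sqrt (1 - C ^ 2) with hs
  have hs0 : 0 ≤ s := Real.sqrt_nonneg _
  have hss : s ^ 2 = 1 - C ^ 2 := Real.sq_sqrt (by nlinarith)
  obtain ⟨y, hy⟩ : ∃ y, y = C / (1 + s) := ⟨_, rfl⟩
  have hy0 : 0 < y := by rw [hy]; positivity
  have hy1 : y ≤ 1 := by rw [hy, div_le_one (by positivity)]; linarith
  have hy2 : 1 + y ^ 2 = 2 / (1 + s) := by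
    rw [hy]; field_simp; nlinarith
  have hpos : 0 < 1 + y ^ 2 := by positivity
  have hp : (1 + s) / 2 = (1 + y ^ 2)⁻¹ := by rw [hy2]; field_simp
  have hq : 1 - (1 + y ^ 2)⁻¹ = y ^ 2 * (1 + y ^ 2)⁻¹ := by field_simp; ring
  have hC : C = 2 * y * (1 + y ^ 2)⁻¹ := by rw [← hp, hy]; field_simp
  have hl2 : 0 < Real.log 2 := Real.log_pos (by norm_num)
  have he : eof C = (Real.log (1 + y ^ 2) - y ^ 2 * (1 + y ^ 2)⁻¹ * (2 * Real.log y))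
      / Real.log 2 := by
    unfold eof binEntropy
    rw [← hs, hp, hq]
    unfold Real.logb
    rw [Real.log_mul (by positivity) (by positivity), Real.log_inv, Real.log_pow]
    push_cast
    field_simp
    ring
  have hL : 0 ≤ Real.log (1 + y ^ 2) := Real.log_nonneg (by nlinarith)
  have hly : Real.log y ≤ 0 := Real.log_nonpos hy0.le hy1
  have hw : 0 ≤ y ^ 2 * (1 + y ^ 2)⁻¹ := by positivity
  constructor
  · rw [he]
    apply div_nonneg _ hl2.le
    nlinarith
  · rw [he, div_le_iff₀ hl2]
    have h := mul_le_mul_of_nonneg_left (aux_phi hy0 hy1)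
      (show 0 ≤ y * (1 + y ^ 2)⁻¹ by positivity)
    have e : y * (1 + y ^ 2)⁻¹ * ((1 / y + y) * Real.log (1 + y ^ 2) - 2 * (y * Real.log y))
      = Real.log (1 + y ^ 2) - y ^ 2 * (1 + y ^ 2)⁻¹ * (2 * Real.log y) := by
      field_simp
    rw [e] at h
    have e2 : C * Real.log 2 = y * (1 + y ^ 2)⁻¹ * (2 * Real.log 2) := by
      rw [hC.trans (by ring : _ = y * (1 + y ^ 2)⁻¹ * 2)]; ring
    rw [e2]
    exact h

lemma aux_alg {a b r : ℝ} (ha : 0 < a) (ha1 : a < 1) (hb : 0 < b) (hb1 : b < 1)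
    (hr : 0 < r) (hr1 : r < 1) :
    (2 * r ^ 2 / (1 + r ^ 4)) ^ 2 * (b ^ 2 * (1 - a ^ 2) + a ^ 2 * (1 - b ^ 2))
      ≤ (1 - a * b * (1 - r)) ^ 2 := by
  obtain ⟨t, ht⟩ : ∃ t, t = 2 * r ^ 2 / (1 + r ^ 4) := ⟨_, rfl⟩
  obtain ⟨u, hu⟩ : ∃ u, u = (1 - r ^ 4) / (1 + r ^ 4) := ⟨_, rfl⟩
  have htu : t ^ 2 = 1 - u ^ 2 := by rw [ht, hu]; field_simp; ring
  have hru : 1 - r ≤ u := by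
    rw [hu, le_div_iff₀ (by positivity)]
    have : (1 - r ^ 4) - (1 - r) * (1 + r ^ 4) = (1 - r) * (r + r ^ 2 + r ^ 3 * (1 - r)) := by ring
    have h2 : 0 ≤ (1 - r) * (r + r ^ 2 + r ^ 3 * (1 - r)) := by
      have : 0 < 1 - r := by linarith
      positivity
    linarith
  rw [← ht]
  obtain ⟨s, hs⟩ : ∃ s, s = a * b := ⟨_, rfl⟩
  have hA : b ^ 2 * (1 - a ^ 2) + a ^ 2 * (1 - b ^ 2) ≤ 1 - s ^ 2 := by
    have : 0 ≤ (1 - a ^ 2) * (1 - b ^ 2) := mul_nonneg (by nlinarith) (by nlinarith)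
    rw [hs]; nlinarith
  rw [← hs]
  have hs1 : s < 1 := by rw [hs]; nlinarith
  have hs0 : 0 < s := by rw [hs]; positivity
  have h1 : t ^ 2 * (b ^ 2 * (1 - a ^ 2) + a ^ 2 * (1 - b ^ 2)) ≤ t ^ 2 * (1 - s ^ 2) :=
    mul_le_mul_of_nonneg_left hA (sq_nonneg t)
  obtain ⟨v, hv⟩ : ∃ v, v = 1 - r := ⟨_, rfl⟩
  have hv0 : 0 < v := by linarith
  have h2 : t ^ 2 * (1 - s ^ 2) ≤ (1 - v ^ 2) * (1 - s ^ 2) := by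
    apply mul_le_mul_of_nonneg_right _ (by nlinarith)
    rw [htu]; nlinarith
  rw [← hv]
  nlinarith [sq_nonneg (s - v)]

lemma conc_range {a b r : ℝ} (ha : 0 < a) (ha1 : a < 1 / 2) (hb : 0 < b) (hb1 : b < 1 / 2)
    (hr : 0 < r) : 
    0 < 4 * b * Real.sqrt (1 - 4 * a ^ 2) * r ^ 2 / (1 + r ^ 4) ∧
    4 * b * Real.sqrt (1 - 4 * a ^ 2) * r ^ 2 / (1 + r ^ 4) ≤ 1 := by
  have hq : 0 < Real.sqrt (1 - 4 * a ^ 2) := Real.sqrt_pos.2 (by nlinarith)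
  have hq1 : Real.sqrt (1 - 4 * a ^ 2) ≤ 1 := Real.sqrt_le_one.2 (by nlinarith)
  refine ⟨by positivity, ?_⟩
  rw [div_le_one (by positivity)]
  have h1 : 4 * b * Real.sqrt (1 - 4 * a ^ 2) ≤ 2 := by nlinarith
  nlinarith [sq_nonneg (r ^ 2 - 1), mul_le_mul_of_nonneg_right h1 (sq_nonneg r)]

/-- Non-generic GHZ-class states `ψ(g₁,g₂,0,r)` with `g₁,g₂ ≠ 0` and `r ∈ (0,1)`
satisfy the source-entanglement monogamy relation `E_s² ≥ E₁₂² + E₁₃² + E₂₃²`. -/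
theorem source_monogamy_nongeneric (g₁ g₂ r : ℝ)
    (hg₁ : g₁ ∈ Set.Ioo (0 : ℝ) (1 / 2)) (hg₂ : g₂ ∈ Set.Ioo (0 : ℝ) (1 / 2))
    (hr : r ∈ Set.Ioo (0 : ℝ) 1) :
    (1 - 4 * g₁ * g₂ * (1 - r)) ^ 2 ≥
      (eof (4 * g₂ * Real.sqrt (1 - 4 * g₁ ^ 2) * r ^ 2 / (1 + r ^ 4))) ^ 2 +
      (eof (4 * g₁ * Real.sqrt (1 - 4 * g₂ ^ 2) * r ^ 2 / (1 + r ^ 4))) ^ 2 := by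
  obtain ⟨a0, a1⟩ := hg₁
  obtain ⟨b0, b1⟩ := hg₂
  obtain ⟨r0, r1⟩ := hr
  obtain ⟨c1, c2⟩ := conc_range a0 a1 b0 b1 r0
  obtain ⟨d1, d2⟩ := conc_range b0 b1 a0 a1 r0
  obtain ⟨e1, e2⟩ := eof_bound c1 c2
  obtain ⟨f1, f2⟩ := eof_bound d1 d2
  have h1 := pow_le_pow_left₀ e1 e2 2
  have h2 := pow_le_pow_left₀ f1 f2 2
  have h := aux_alg (a := 2 * g₁) (b := 2 * g₂) (r := r) (by linarith) (by linarith)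
    (by linarith) (by linarith) r0 r1
  have sa : Real.sqrt (1 - 4 * g₁ ^ 2) ^ 2 = 1 - 4 * g₁ ^ 2 := Real.sq_sqrt (by nlinarith)
  have sb : Real.sqrt (1 - 4 * g₂ ^ 2) ^ 2 = 1 - 4 * g₂ ^ 2 := Real.sq_sqrt (by nlinarith)
  have k1 : (4 * g₂ * Real.sqrt (1 - 4 * g₁ ^ 2) * r ^ 2 / (1 + r ^ 4)) ^ 2
      = (2 * r ^ 2 / (1 + r ^ 4)) ^ 2 * ((2 * g₂) ^ 2 * (1 - (2 * g₁) ^ 2)) := by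
    rw [div_pow, div_pow, mul_pow, mul_pow, sa]; ring
  have k2 : (4 * g₁ * Real.sqrt (1 - 4 * g₂ ^ 2) * r ^ 2 / (1 + r ^ 4)) ^ 2
      = (2 * r ^ 2 / (1 + r ^ 4)) ^ 2 * ((2 * g₁) ^ 2 * (1 - (2 * g₂) ^ 2)) := by
    rw [div_pow, div_pow, mul_pow, mul_pow, sb]; ring
  rw [k1] at h1
  rw [k2] at h2
  have e : (1 - 4 * g₁ * g₂ * (1 - r)) ^ 2 = (1 - 2 * g₁ * (2 * g₂) * (1 - r)) ^ 2 := by ring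
  rw [e]
  linarith
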